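/- For every ℝ-linear connection ∇ of L on E and every alternating ℝ-multilinear 1-form θ : L → End_C(E), the map ∇ + θ is again an ℝ-linear connection and cs_2(∇, ∇+θ) = Tr_*(2·θ∧R^∇ + θ∧d^{∇̄}θ + (2/3)·θ∧θ∧θ), where (d^{∇̄}θ)(a,b) = [∇_a, θ(b)] − [∇_b, θ(a)] − θ(⁅a,b⁆). -/

import Mathlib

open Module

/-- The trace over `C` of an `ℝ`-linear endomorphism of `E` whose underlying
function happens to be `C`-linear (and `0` otherwise). -/
noncomputable def trR (C : Type*) {E : Type*} [CommRing C] [AddCommGroup E]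
    [Module ℝ E] [Module C E] (e : E →ₗ[ℝ] E) : C :=
  letI := Classical.propDecidable
  if h : ∃ g : E →ₗ[C] E, ⇑g = ⇑e then LinearMap.trace C E h.choose else 0

/-- An ℝ-linear connection of the Lie algebra `L` (with anchor `ρ`) on the `C`-module `E`. -/
def IsConn {L C E : Type*} [LieRing L] [LieAlgebra ℝ L] [CommRing C] [Algebra ℝ C]
    [AddCommGroup E] [Module ℝ E] [Module C E]
    (ρ : L →ₗ[ℝ] Derivation ℝ C C) (D : L →ₗ[ℝ] Module.End ℝ E) : Prop :=
  ∀ (a : L) (f : C) (e : E), D a (f • e) = f • D a e + ρ a f • e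

/-- The curvature of an ℝ-linear map `D : L →ₗ[ℝ] End ℝ E`. -/
def curv {L E : Type*} [LieRing L] [LieAlgebra ℝ L] [AddCommGroup E] [Module ℝ E]
    (D : L →ₗ[ℝ] Module.End ℝ E) (a b : L) : Module.End ℝ E :=
  D a * D b - D b * D a - D ⁅a, b⁆

/-- The curvature as an `End ℝ E`-valued 2-form. -/
def curv2 {L E : Type*} [LieRing L] [LieAlgebra ℝ L] [AddCommGroup E] [Module ℝ E]
    (D : L →ₗ[ℝ] Module.End ℝ E) : (Fin 2 → L) → Module.End ℝ E :=
  fun a => curv D (a 0) (a 1)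

/-- The Chevalley–Eilenberg style differential of a `V`-valued `n`-form on `L`,
with respect to an action `act` of `L` on `V`:
`(dω)(a₁,…,a_{n+1}) = Σᵢ (−1)^{i+1} act(aᵢ)(ω(a₁,…,âᵢ,…)) +
  Σ_{i<j} (−1)^{i+j} ω(⁅aᵢ,aⱼ⁆, a₁,…,âᵢ,…,âⱼ,…)`. -/
def dGen {L V : Type*} [LieRing L] [AddCommGroup V] (act : L → V → V) :
    {n : ℕ} → ((Fin n → L) → V) → ((Fin (n + 1) → L) → V)
  | 0, ω, a => act (a 0) (ω Fin.elim0)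
  | (m + 1), ω, a =>
      (∑ i : Fin (m + 2), (-1 : ℤ) ^ (i : ℕ) • act (a i) (ω (fun k => a (i.succAbove k)))) +
      ∑ i : Fin (m + 2), ∑ j : Fin (m + 2),
        if h : (i : ℕ) < (j : ℕ) then
          (-1 : ℤ) ^ ((i : ℕ) + (j : ℕ)) • ω (Fin.cons ⁅a i, a j⁆
            (fun k : Fin m => a (j.succAbove
              ((⟨(i : ℕ), by have := j.isLt; omega⟩ : Fin (m + 1)).succAbove k))))
        else 0

/-- The differential `d_ρ` on `C`-valued ℝ-linear forms on `L`. -/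
def dRho {L C : Type*} [LieRing L] [LieAlgebra ℝ L] [CommRing C] [Algebra ℝ C]
    (ρ : L →ₗ[ℝ] Derivation ℝ C C) {n : ℕ} (ω : (Fin n → L) → C) :
    (Fin (n + 1) → L) → C :=
  dGen (fun a c => ρ a c) ω

/-- The differential `d^{∇̄}` on `End ℝ E`-valued ℝ-linear forms on `L`,
where `∇̄_a = [∇_a, ·]`. -/
def dEnd {L E : Type*} [LieRing L] [LieAlgebra ℝ L] [AddCommGroup E] [Module ℝ E]
    (D : L →ₗ[ℝ] Module.End ℝ E) {n : ℕ} (ω : (Fin n → L) → Module.End ℝ E) :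
    (Fin (n + 1) → L) → Module.End ℝ E :=
  dGen (fun a φ => D a * φ - φ * D a) ω

/-- The wedge product (with composition as multiplication of values) of
`End ℝ E`-valued forms:
`(ω∧η)(a₁,…,a_{m+n}) = (1/(m!·n!)) Σ_{τ} sgn τ · ω(a_{τ(1)},…) ∘ η(a_{τ(m+1)},…)`. -/
noncomputable def wedge {L E : Type*} [AddCommGroup E] [Module ℝ E] {m n : ℕ}
    (ω : (Fin m → L) → Module.End ℝ E) (η : (Fin n → L) → Module.End ℝ E) :
    (Fin (m + n) → L) → Module.End ℝ E :=
  fun a => ((m.factorial * n.factorial : ℝ))⁻¹ •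
    ∑ τ : Equiv.Perm (Fin (m + n)), ((Equiv.Perm.sign τ : ℤ) •
      (ω (fun i => a (τ (Fin.castAdd n i))) * η (fun j => a (τ (Fin.natAdd m j)))))

/-- The `p`-th wedge power of an `End ℝ E`-valued 2-form. -/
noncomputable def wpow {L E : Type*} [AddCommGroup E] [Module ℝ E]
    (R : (Fin 2 → L) → Module.End ℝ E) :
    (p : ℕ) → (Fin (2 * p) → L) → Module.End ℝ E
  | 0 => fun _ => 1
  | (p + 1) => fun a => wedge R (wpow R p) (fun i => a (Fin.cast (by omega) i))

/-- The `k`-th wedge power of an `End ℝ E`-valued 1-form. -/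
noncomputable def wpow1 {L E : Type*} [AddCommGroup E] [Module ℝ E]
    (θ : (Fin 1 → L) → Module.End ℝ E) :
    (k : ℕ) → (Fin k → L) → Module.End ℝ E
  | 0 => fun _ => 1
  | (k + 1) => fun a => wedge θ (wpow1 θ k) (fun i => a (Fin.cast (by omega) i))

/-- The Chern character form `ch_p(∇) = Tr_*((R^∇)^{∧p})`. -/
noncomputable def chp {L E : Type*} (C : Type*) [LieRing L] [LieAlgebra ℝ L]
    [CommRing C] [AddCommGroup E] [Module ℝ E] [Module C E]
    (D : L →ₗ[ℝ] Module.End ℝ E) (p : ℕ) : (Fin (2 * p) → L) → C :=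
  fun a => trR C (wpow (curv2 D) p a)

/-- `∫₀ˢ f(t) dt` for a function `f : ℝ → C` given by a polynomial with
coefficients in the ℝ-algebra `C` (and `0` if `f` is not polynomial). -/
noncomputable def intPolyTo {C : Type*} [CommRing C] [Algebra ℝ C] (s : ℝ) (f : ℝ → C) : C :=
  letI := Classical.propDecidable
  if h : ∃ P : Polynomial C, ∀ t : ℝ, f t = Polynomial.eval (algebraMap ℝ C t) P then
    ∑ k ∈ Finset.range (h.choose.natDegree + 1),
      (s ^ (k + 1) / ((k : ℝ) + 1)) • h.choose.coeff k
  else 0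

/-- The valuewise integral over the standard 2-simplex
`Δ² = {(t₁,t₂) : t₁ ≥ 0, t₂ ≥ 0, t₁ + t₂ ≤ 1}` of a `C`-valued polynomial function. -/
noncomputable def intSimplex2 {C : Type*} [CommRing C] [Algebra ℝ C] (f : ℝ → ℝ → C) : C :=
  intPolyTo 1 (fun t1 => intPolyTo (1 - t1) (fun t2 => f t1 t2))

/-- The Chern–Simons transgression form for a pair of ℝ-linear connections:
`cs_p(∇⁰,∇¹) = p·∫₀¹ Tr_*(λ ∧ (R_t)^{∧(p−1)}) dt` where `λ = ∇¹ − ∇⁰` and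
`R_t` is the curvature of `∇⁰ + t•λ`. -/
noncomputable def csPair {L E : Type*} (C : Type*) [LieRing L] [LieAlgebra ℝ L]
    [CommRing C] [Algebra ℝ C] [AddCommGroup E] [Module ℝ E] [Module C E]
    (D0 D1 : L →ₗ[ℝ] Module.End ℝ E) (p : ℕ) : (Fin (2 * (p - 1) + 1) → L) → C :=
  fun a => (p : ℝ) • intPolyTo 1 (fun t =>
    trR C (wedge (fun v : Fin 1 → L => (D1 - D0) (v 0))
      (wpow (curv2 (D0 + t • (D1 - D0))) (p - 1))
      (fun i => a (Fin.cast (by omega) i))))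

/-- The Chern–Simons transgression form for a triple of ℝ-linear connections:
`cs_p(∇⁰,∇¹,∇²) = −p(p−1)·∫_{Δ²} Tr_*(λ₁ ∧ λ₂ ∧ (R_{(t₁,t₂)})^{∧(p−2)}) dt₁dt₂`
where `λᵢ = ∇ⁱ − ∇⁰` and `R_{(t₁,t₂)}` is the curvature of `∇⁰ + t₁•λ₁ + t₂•λ₂`. -/
noncomputable def csTriple {L E : Type*} (C : Type*) [LieRing L] [LieAlgebra ℝ L]
    [CommRing C] [Algebra ℝ C] [AddCommGroup E] [Module ℝ E] [Module C E]
    (D0 D1 D2 : L →ₗ[ℝ] Module.End ℝ E) (p : ℕ) : (Fin (2 * (p - 2) + 2) → L) → C :=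
  fun a => (-((p : ℝ) * ((p : ℝ) - 1))) • intSimplex2 (fun t1 t2 =>
    trR C (wedge (fun v : Fin 1 → L => (D1 - D0) (v 0))
      (wedge (fun v : Fin 1 → L => (D2 - D0) (v 0))
        (wpow (curv2 (D0 + t1 • (D1 - D0) + t2 • (D2 - D0))) (p - 2)))
      (fun i => a (Fin.cast (by omega) i))))


/-- The ℝ-linear inclusion `End_C(E) → End_ℝ(E)`. -/
noncomputable def restrEndMap {C E : Type*} [CommRing C] [Algebra ℝ C] [AddCommGroup E]
    [Module ℝ E] [Module C E] [IsScalarTower ℝ C E] :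
    (E →ₗ[C] E) →ₗ[ℝ] Module.End ℝ E where
  toFun g := g.restrictScalars ℝ
  map_add' _ _ := rfl
  map_smul' _ _ := rfl

/-!
Along `∇ᵗ = ∇ + tθ` the curvature is the polynomial `R^∇ + t d^{∇̄}θ + t² θ∧θ` in `t`. Wedging with
`θ` on the left keeps it polynomial with `C`-linear coefficients, and the trace, being `ℝ`-linear on
`C`-linear endomorphisms, commutes with integration of such polynomials. So `2 ∫₀¹` turns the
coefficients `1, t, t²` into the factors `2, 1, 2/3`.
-/

section PolynomialIntegral

lemma eq_zero_of_forall_eval_algebraMap_eq_zero {k A : Type*} [Field k] [Infinite k] [CommRing A]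
    [Algebra k A] (P : Polynomial A) (h : ∀ t : k, P.eval (algebraMap k A t) = 0) : P = 0 := by
  ext n
  rw [Polynomial.coeff_zero, ← Module.forall_dual_apply_eq_zero_iff k]
  -- `A` may have zero divisors, so roots are counted over `k`, after applying a functional.
  intro φ
  let Q : Polynomial k := P.sum fun i c ↦ Polynomial.monomial i (φ c)
  have hcoeff : Q.coeff n = φ (P.coeff n) := by
    simp +contextual [Q, Polynomial.sum_def, Polynomial.coeff_monomial]
  have heval (t : k) : Q.eval t = φ (P.eval (algebraMap k A t)) := by
    rw [Polynomial.eval_eq_sum (p := P)]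
    simp only [Q, Polynomial.sum_def, Polynomial.eval_finsetSum, Polynomial.eval_monomial, map_sum]
    refine Finset.sum_congr rfl fun i _ ↦ ?_
    rw [← map_pow, mul_comm (P.coeff i), ← Algebra.smul_def, map_smul, smul_eq_mul, mul_comm]
  have hQ : Q = 0 := Polynomial.zero_of_eval_zero Q fun t ↦ by rw [heval, h, map_zero]
  rw [← hcoeff, hQ, Polynomial.coeff_zero]

variable {C : Type*} [CommRing C] [Algebra ℝ C]

lemma intPolyTo_eval (s : ℝ) (P : Polynomial C) :
    intPolyTo s (fun t ↦ P.eval (algebraMap ℝ C t))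
      = Polynomial.lsum (fun k ↦ LinearMap.lsmul ℝ C (s ^ (k + 1) / ((k : ℝ) + 1))) P := by
  have hex : ∃ Q : Polynomial C, ∀ t : ℝ,
      P.eval (algebraMap ℝ C t) = Q.eval (algebraMap ℝ C t) := ⟨P, fun _ ↦ rfl⟩
  have hchoose : hex.choose = P := by
    refine sub_eq_zero.mp (eq_zero_of_forall_eval_algebraMap_eq_zero (k := ℝ) _ fun t ↦ ?_)
    rw [Polynomial.eval_sub, ← hex.choose_spec t, sub_self]
  rw [intPolyTo, dif_pos hex, hchoose, Polynomial.lsum_apply,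
    Polynomial.sum_over_range _ fun _ ↦ map_zero _]
  rfl

lemma intPolyTo_sum_pow_smul (s : ℝ) {n : ℕ} (c : Fin n → C) :
    intPolyTo s (fun t ↦ ∑ k : Fin n, t ^ (k : ℕ) • c k)
      = ∑ k : Fin n, (s ^ ((k : ℕ) + 1) / ((k : ℝ) + 1)) • c k := by
  let P : Polynomial C := ∑ k : Fin n, Polynomial.monomial (k : ℕ) (c k)
  have heval (t : ℝ) : ∑ k : Fin n, t ^ (k : ℕ) • c k = P.eval (algebraMap ℝ C t) := by
    simp only [P, Polynomial.eval_finsetSum, Polynomial.eval_monomial, Algebra.smul_def, map_pow,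
      mul_comm]
  simp only [heval, intPolyTo_eval, P]
  simp [Polynomial.sum_monomial_index]

end PolynomialIntegral

section Trace

variable {C E : Type*} [CommRing C] [Algebra ℝ C] [AddCommGroup E] [Module ℝ E] [Module C E]
  [IsScalarTower ℝ C E]

variable (C E) in
/-- The subalgebra `End_C(E) ⊆ End_ℝ(E)` of the `C`-linear endomorphisms, cut out as a predicate so
that forms with values in `Module.End ℝ E` can be said to be `End_C(E)`-valued. -/
def linearEnd : Subalgebra ℝ (Module.End ℝ E) where
  carrier := {e | ∀ (f : C) (x : E), e (f • x) = f • e x}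
  mul_mem' {d e} hd he f x := by simp only [Module.End.mul_apply, he f x, hd f (e x)]
  add_mem' {d e} hd he f x := by simp only [LinearMap.add_apply, hd f x, he f x, smul_add]
  algebraMap_mem' r f x := smul_comm r f x

lemma mem_linearEnd {e : Module.End ℝ E} :
    e ∈ linearEnd C E ↔ ∀ (f : C) (x : E), e (f • x) = f • e x :=
  Iff.rfl

lemma mem_linearEnd_iff_exists_restrictScalars {e : Module.End ℝ E} :
    e ∈ linearEnd C E ↔ ∃ g : E →ₗ[C] E, g.restrictScalars ℝ = e :=
  ⟨fun he ↦ ⟨{ e with map_smul' := he }, rfl⟩, by rintro ⟨g, rfl⟩; exact g.map_smul⟩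

lemma trR_restrictScalars (g : E →ₗ[C] E) :
    trR C (g.restrictScalars ℝ) = LinearMap.trace C E g := by
  have hex : ∃ g' : E →ₗ[C] E, ⇑g' = ⇑(g.restrictScalars ℝ) := ⟨g, rfl⟩
  rw [trR, dif_pos hex, DFunLike.coe_injective hex.choose_spec]

lemma trR_sum_smul {ι : Type*} (s : Finset ι) (r : ι → ℝ) {e : ι → Module.End ℝ E}
    (he : ∀ i, e i ∈ linearEnd C E) :
    trR C (∑ i ∈ s, r i • e i) = ∑ i ∈ s, r i • trR C (e i) := by
  choose g hg using fun i ↦ mem_linearEnd_iff_exists_restrictScalars.mp (he i)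
  have hsum : ∑ i ∈ s, r i • e i = (∑ i ∈ s, r i • g i).restrictScalars ℝ := by
    ext x
    simp [← hg]
  rw [hsum, trR_restrictScalars]
  simp only [map_sum, LinearMap.map_smul_of_tower, ← hg, trR_restrictScalars]

lemma intPolyTo_trR_sum_pow_smul (s : ℝ) {n : ℕ} {e : Fin n → Module.End ℝ E}
    (he : ∀ k, e k ∈ linearEnd C E) :
    intPolyTo s (fun t ↦ trR C (∑ k : Fin n, t ^ (k : ℕ) • e k))
      = trR C (∑ k : Fin n, (s ^ ((k : ℕ) + 1) / ((k : ℝ) + 1)) • e k) := by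
  simp only [trR_sum_smul _ _ he, intPolyTo_sum_pow_smul]

end Trace

section Wedge

variable {L E : Type*} [AddCommGroup E] [Module ℝ E] {m n : ℕ}

lemma wedge_add_right (ω : (Fin m → L) → Module.End ℝ E) (η η' : (Fin n → L) → Module.End ℝ E) :
    wedge ω (η + η') = wedge ω η + wedge ω η' := by
  ext1 a
  simp only [wedge, Pi.add_apply, mul_add, smul_add, Finset.sum_add_distrib]

lemma wedge_smul_right (ω : (Fin m → L) → Module.End ℝ E) (r : ℝ)
    (η : (Fin n → L) → Module.End ℝ E) : wedge ω (r • η) = r • wedge ω η := by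
  ext1 a
  simp only [wedge, Pi.smul_apply, mul_smul_comm, Finset.smul_sum, smul_comm _ r]

lemma wedge_mem {S : Subalgebra ℝ (Module.End ℝ E)} {ω : (Fin m → L) → Module.End ℝ E}
    {η : (Fin n → L) → Module.End ℝ E} (hω : ∀ u, ω u ∈ S) (hη : ∀ u, η u ∈ S)
    (a : Fin (m + n) → L) : wedge ω η a ∈ S :=
  S.smul_mem (sum_mem fun _ _ ↦ zsmul_mem (mul_mem (hω _) (hη _)) _) _

lemma wedge_one_right {ω : (Fin m → L) → Module.End ℝ E}
    (hω : ∀ (τ : Equiv.Perm (Fin m)) (u : Fin m → L), ω (u ∘ τ) = Equiv.Perm.sign τ • ω u) :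
    wedge ω (1 : (Fin 0 → L) → Module.End ℝ E) = ω := by
  ext1 a
  have hterm (τ : Equiv.Perm (Fin m)) : (Equiv.Perm.sign τ : ℤ) • (ω (a ∘ τ) * 1) = ω a := by
    rw [mul_one, hω, ← Units.smul_def, smul_smul, Int.units_mul_self, one_smul]
  calc wedge ω (1 : (Fin 0 → L) → Module.End ℝ E) a
      = (m.factorial * Nat.factorial 0 : ℝ)⁻¹ •
          ∑ τ : Equiv.Perm (Fin m), (Equiv.Perm.sign τ : ℤ) • (ω (a ∘ τ) * 1) := rfl
    _ = (m.factorial : ℝ)⁻¹ • (m.factorial : ℝ) • ω a := by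
      rw [Finset.sum_congr rfl fun τ _ ↦ hterm τ, Finset.sum_const, Finset.card_univ,
        Fintype.card_perm, Fintype.card_fin, Nat.factorial_zero, Nat.cast_one, mul_one,
        Nat.cast_smul_eq_nsmul]
    _ = ω a := inv_smul_smul₀ (by positivity) _

lemma univ_perm_fin_two :
    (Finset.univ : Finset (Equiv.Perm (Fin 2))) = {1, Equiv.swap 0 1} := by
  decide

lemma wedge_one_one_apply (ω η : (Fin 1 → L) → Module.End ℝ E) (u : Fin 2 → L) :
    wedge ω η u = ω (fun _ ↦ u 0) * η (fun _ ↦ u 1) - ω (fun _ ↦ u 1) * η (fun _ ↦ u 0) := by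
  have hcast (i : Fin 1) : Fin.castAdd 1 i = (0 : Fin 2) := by decide +revert
  have hnat (i : Fin 1) : Fin.natAdd 1 i = (1 : Fin 2) := by decide +revert
  rw [wedge, univ_perm_fin_two, Finset.sum_pair (by decide)]
  simp only [hcast, hnat]
  simp [sub_eq_add_neg]

end Wedge

section Differential

/-- A map on `L` regarded as a 1-form, in the encoding of `n`-forms as functions on `Fin n → L` to
which `wedge` and `dEnd` apply. -/
def oneForm {L V : Type*} (T : L → V) : (Fin 1 → L) → V :=
  fun u ↦ T (u 0)

lemma dGen_mem {L V : Type*} [LieRing L] [AddCommGroup V] {S : AddSubgroup V} {act : L → V → V}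
    (hact : ∀ a, ∀ v ∈ S, act a v ∈ S) {n : ℕ} {ω : (Fin n → L) → V} (hω : ∀ u, ω u ∈ S)
    (a : Fin (n + 1) → L) : dGen act ω a ∈ S := by
  cases n with
  | zero => exact hact _ _ (hω _)
  | succ m =>
    refine add_mem (sum_mem fun i _ ↦ zsmul_mem (hact _ _ (hω _)) _)
      (sum_mem fun i _ ↦ sum_mem fun j _ ↦ ?_)
    split_ifs
    · exact zsmul_mem (hω _) _
    · exact zero_mem S

variable {L E : Type*} [LieRing L] [LieAlgebra ℝ L] [AddCommGroup E] [Module ℝ E]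

lemma dEnd_oneForm_apply (D : L →ₗ[ℝ] Module.End ℝ E) (T : L → Module.End ℝ E) (u : Fin 2 → L) :
    dEnd D (oneForm T) u
      = (D (u 0) * T (u 1) - T (u 1) * D (u 0)) - (D (u 1) * T (u 0) - T (u 0) * D (u 1))
        - T ⁅u 0, u 1⁆ := by
  calc dEnd D (oneForm T) u
      = (D (u 0) * T (u 1) - T (u 1) * D (u 0)) + -(D (u 1) * T (u 0) - T (u 0) * D (u 1))
          + -T ⁅u 0, u 1⁆ := by simp [dEnd, dGen, oneForm, Fin.sum_univ_two]
    _ = _ := by simp only [sub_eq_add_neg]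

end Differential

section Curvature

variable {L E : Type*} [LieRing L] [LieAlgebra ℝ L] [AddCommGroup E] [Module ℝ E]

lemma curv_swap (D : L →ₗ[ℝ] Module.End ℝ E) (a b : L) : curv D b a = -curv D a b := by
  rw [curv, curv, ← lie_skew a b, map_neg]
  abel

lemma curv2_comp_perm (D : L →ₗ[ℝ] Module.End ℝ E) (τ : Equiv.Perm (Fin 2)) (u : Fin 2 → L) :
    curv2 D (u ∘ τ) = Equiv.Perm.sign τ • curv2 D u := by
  have hτ : τ ∈ ({1, Equiv.swap 0 1} : Finset (Equiv.Perm (Fin 2))) :=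
    univ_perm_fin_two ▸ Finset.mem_univ τ
  obtain rfl | rfl : τ = 1 ∨ τ = Equiv.swap 0 1 := by simpa using hτ
  · simp
  · simp [curv2, curv_swap D (u 0) (u 1)]

lemma wpow_curv2_one (D : L →ₗ[ℝ] Module.End ℝ E) : wpow (curv2 D) 1 = curv2 D :=
  wedge_one_right (curv2_comp_perm D)

lemma curv2_add_smul (D T : L →ₗ[ℝ] Module.End ℝ E) (t : ℝ) :
    curv2 (D + t • T)
      = curv2 D + t • dEnd D (oneForm T) + t ^ 2 • wedge (oneForm T) (oneForm T) := by
  ext1 u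
  simp only [Pi.add_apply, Pi.smul_apply, wedge_one_one_apply, dEnd_oneForm_apply, oneForm,
    curv2, curv, LinearMap.add_apply, LinearMap.smul_apply, mul_add, add_mul, smul_mul_assoc,
    mul_smul_comm, smul_add, smul_sub, smul_smul, pow_two]
  abel

lemma wedge_wpow_curv2_add_smul {m : ℕ} (ω : (Fin m → L) → Module.End ℝ E)
    (D T : L →ₗ[ℝ] Module.End ℝ E) (t : ℝ) :
    wedge ω (wpow (curv2 (D + t • T)) 1)
      = wedge ω (curv2 D) + t • wedge ω (dEnd D (oneForm T))
        + t ^ 2 • wedge ω (wedge (oneForm T) (oneForm T)) := by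
  rw [wpow_curv2_one, curv2_add_smul, wedge_add_right, wedge_add_right, wedge_smul_right,
    wedge_smul_right]

end Curvature

section Connection

variable {L C E : Type*} [LieRing L] [LieAlgebra ℝ L] [CommRing C] [Algebra ℝ C] [AddCommGroup E]
  [Module ℝ E] [Module C E] [IsScalarTower ℝ C E] {ρ : L →ₗ[ℝ] Derivation ℝ C C}
  {D : L →ₗ[ℝ] Module.End ℝ E}

lemma IsConn.add_of_mem_linearEnd (hD : IsConn ρ D) {T : L →ₗ[ℝ] Module.End ℝ E}
    (hT : ∀ a, T a ∈ linearEnd C E) : IsConn ρ (D + T) := by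
  intro a f x
  rw [LinearMap.add_apply, LinearMap.add_apply, LinearMap.add_apply, hD a f x, hT a f x, smul_add]
  abel

lemma IsConn.commutator_mem_linearEnd (hD : IsConn ρ D) (a : L) {e : Module.End ℝ E}
    (he : e ∈ linearEnd C E) : D a * e - e * D a ∈ linearEnd C E := by
  rw [mem_linearEnd] at he ⊢
  intro f x
  simp only [LinearMap.sub_apply, Module.End.mul_apply, map_add, hD a, he, smul_sub]
  abel

lemma IsConn.dEnd_mem_linearEnd (hD : IsConn ρ D) {n : ℕ} {ω : (Fin n → L) → Module.End ℝ E}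
    (hω : ∀ u, ω u ∈ linearEnd C E) (a : Fin (n + 1) → L) : dEnd D ω a ∈ linearEnd C E :=
  dGen_mem (S := (linearEnd C E).toSubmodule.toAddSubgroup)
    (fun b _ he ↦ hD.commutator_mem_linearEnd b he) hω a

lemma IsConn.curv_mem_linearEnd (hD : IsConn ρ D)
    (hρ : ∀ (a b : L) (f : C), ρ ⁅a, b⁆ f = ρ a (ρ b f) - ρ b (ρ a f)) (a b : L) :
    curv D a b ∈ linearEnd C E := by
  intro f x
  simp only [curv, LinearMap.sub_apply, Module.End.mul_apply, map_add, hD _ _ _, hρ, smul_sub,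
    sub_smul]
  abel

lemma IsConn.csPair_two_self_add (hD : IsConn ρ D)
    (hρ : ∀ (a b : L) (f : C), ρ ⁅a, b⁆ f = ρ a (ρ b f) - ρ b (ρ a f))
    {T : L →ₗ[ℝ] Module.End ℝ E} (hT : ∀ a, T a ∈ linearEnd C E) (v : Fin 3 → L) :
    csPair C D (D + T) 2 v
      = trR C ((2 : ℝ) • wedge (oneForm T) (curv2 D) v + wedge (oneForm T) (dEnd D (oneForm T)) v
          + (2 / 3 : ℝ) • wedge (oneForm T) (wedge (oneForm T) (oneForm T)) v) := by
  have hω (u : Fin 1 → L) : oneForm T u ∈ linearEnd C E := hT (u 0)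
  have hR (u : Fin 2 → L) : curv2 D u ∈ linearEnd C E := hD.curv_mem_linearEnd hρ (u 0) (u 1)
  have hd (u : Fin 2 → L) : dEnd D (oneForm T) u ∈ linearEnd C E := hD.dEnd_mem_linearEnd hω u
  have hωω (u : Fin 2 → L) : wedge (oneForm T) (oneForm T) u ∈ linearEnd C E := wedge_mem hω hω u
  let e : Fin 3 → Module.End ℝ E :=
    ![wedge (oneForm T) (curv2 D) v, wedge (oneForm T) (dEnd D (oneForm T)) v,
      wedge (oneForm T) (wedge (oneForm T) (oneForm T)) v]
  have he (k : Fin 3) : e k ∈ linearEnd C E := by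
    fin_cases k
    exacts [wedge_mem hω hR v, wedge_mem hω hd v, wedge_mem hω hωω v]
  have hexpand (t : ℝ) : wedge (oneForm T) (wpow (curv2 (D + t • T)) 1) v
      = ∑ k : Fin 3, t ^ (k : ℕ) • e k := by
    rw [wedge_wpow_curv2_add_smul]
    simp [e, Fin.sum_univ_three]
  calc csPair C D (D + T) 2 v
      = (2 : ℝ) • intPolyTo 1
          (fun t ↦ trR C (wedge (oneForm T) (wpow (curv2 (D + t • T)) 1) v)) := by
        rw [csPair, add_sub_cancel_left]; rfl
    _ = (2 : ℝ) • trR C (∑ k : Fin 3, ((1 : ℝ) ^ ((k : ℕ) + 1) / ((k : ℝ) + 1)) • e k) := by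
        simp only [hexpand, intPolyTo_trR_sum_pow_smul 1 he]
    _ = trR C (∑ k : Fin 3, (2 * ((1 : ℝ) ^ ((k : ℕ) + 1) / ((k : ℝ) + 1))) • e k) := by
        simp only [trR_sum_smul _ _ he, Finset.smul_sum, smul_smul]
    _ = _ := by norm_num [e, Fin.sum_univ_three, Matrix.cons_val_two]

end Connection

theorem stmt17_general {L : Type*} {C : Type*} {E : Type*}
    [LieRing L] [LieAlgebra ℝ L] [CommRing C] [Algebra ℝ C]
    [AddCommGroup E] [Module ℝ E] [Module C E] [IsScalarTower ℝ C E]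
    [Module.Finite C E] [Module.Free C E]
    (ρ : L →ₗ[ℝ] Derivation ℝ C C)
    (hρ : ∀ (a b : L) (f : C), ρ ⁅a, b⁆ f = ρ a (ρ b f) - ρ b (ρ a f))
    (D : L →ₗ[ℝ] Module.End ℝ E) (hD : IsConn ρ D)
    (θ : L →ₗ[ℝ] (E →ₗ[C] E)) :
    IsConn ρ (D + restrEndMap.comp θ) ∧
    ∀ v : Fin 3 → L,
      csPair C D (D + restrEndMap.comp θ) 2 v
        = trR C ((2 : ℝ) • wedge (oneForm (restrEndMap.comp θ)) (curv2 D) v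
            + wedge (oneForm (restrEndMap.comp θ)) (dEnd D (oneForm (restrEndMap.comp θ))) v
            + (2 / 3 : ℝ) • wedge (oneForm (restrEndMap.comp θ))
                (wedge (oneForm (restrEndMap.comp θ)) (oneForm (restrEndMap.comp θ))) v) := by
  have hT (a : L) : restrEndMap.comp θ a ∈ linearEnd C E := (θ a).map_smul
  exact ⟨hD.add_of_mem_linearEnd hT, fun v ↦ hD.csPair_two_self_add hρ hT v⟩

/-- `∇ + θ` is an ℝ-linear connection for any `End_C(E)`-valued 1-form
`θ`, and `cs_2(∇, ∇+θ) = Tr_*(2·θ∧R^∇ + θ∧d^{∇̄}θ + (2/3)·θ∧θ∧θ)`. -/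
theorem stmt17 {L : Type*} {C : Type*} {E : Type*}
    [LieRing L] [LieAlgebra ℝ L] [CommRing C] [Algebra ℝ C] [Module C L]
    [AddCommGroup E] [Module ℝ E] [Module C E] [IsScalarTower ℝ C E]
    [Module.Finite C E] [Module.Free C E]
    (ρ : L →ₗ[ℝ] Derivation ℝ C C)
    (hρ : ∀ (a b : L) (f : C), ρ ⁅a, b⁆ f = ρ a (ρ b f) - ρ b (ρ a f))
    (hLeib : ∀ (a b : L) (f : C), ⁅a, f • b⁆ = f • ⁅a, b⁆ + ρ a f • b)
    (D : L →ₗ[ℝ] Module.End ℝ E) (hD : IsConn ρ D)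
    (θ : L →ₗ[ℝ] (E →ₗ[C] E)) :
    IsConn ρ (D + restrEndMap.comp θ) ∧
    ∀ v : Fin (2 * (2 - 1) + 1) → L,
      csPair C D (D + restrEndMap.comp θ) 2 v
        = trR C
            ((2 : ℝ) • wedge (fun u : Fin 1 → L => ((θ (u 0)).restrictScalars ℝ)) (curv2 D)
                (fun i => v (Fin.cast (by omega) i))
            + wedge (fun u : Fin 1 → L => ((θ (u 0)).restrictScalars ℝ))
                (dEnd D (fun u : Fin 1 → L => ((θ (u 0)).restrictScalars ℝ)))
                (fun i => v (Fin.cast (by omega) i))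
            + (2 / 3 : ℝ) • wedge (fun u : Fin 1 → L => ((θ (u 0)).restrictScalars ℝ))
                (wedge (fun u : Fin 1 → L => ((θ (u 0)).restrictScalars ℝ))
                  (fun u : Fin 1 → L => ((θ (u 0)).restrictScalars ℝ)))
                (fun i => v (Fin.cast (by omega) i))) := by
  obtain ⟨hconn, hcs⟩ := stmt17_general ρ hρ D hD θ
  -- The two sides of `congr 1` differ by `Fin.cast`s that are definitionally the identity.
  exact ⟨hconn, fun v ↦ (hcs v).trans (by congr 1)⟩
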